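/- For symplectic matrices M₁ ∈ Sp(2n₁) and M₂ ∈ Sp(2n₂) and any ε ∈ ℝ, M_ε(M₁ ⋄ M₂) = M_ε(M₁) ⋄_s M_ε(M₂) up to the block interleaving permutation; consequently sgn M_ε(M₁ ⋄ M₂) = sgn M_ε(M₁) + sgn M_ε(M₂). -/

import Mathlib

open Matrix BigOperators

noncomputable section

/-- The standard symplectic matrix `J = [[0, -I],[I, 0]]`. -/
def Jmat (ι : Type*) [Fintype ι] [DecidableEq ι] : Matrix (ι ⊕ ι) (ι ⊕ ι) ℝ :=
  Matrix.fromBlocks 0 (-1) 1 0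

/-- `M` is symplectic iff `Mᵀ J M = J`. -/
def IsSymplectic {ι : Type*} [Fintype ι] [DecidableEq ι]
    (M : Matrix (ι ⊕ ι) (ι ⊕ ι) ℝ) : Prop :=
  Mᵀ * Jmat ι * M = Jmat ι

/-- The matrix `M_ε(P)`. -/
def Mmat {ι : Type*} [Fintype ι] [DecidableEq ι] (ε : ℝ)
    (P : Matrix (ι ⊕ ι) (ι ⊕ ι) ℝ) : Matrix (ι ⊕ ι) (ι ⊕ ι) ℝ :=
  Pᵀ * Matrix.fromBlocks (Real.sin (2*ε) • 1) (-(Real.cos (2*ε)) • 1)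
      (-(Real.cos (2*ε)) • 1) (-(Real.sin (2*ε)) • 1) * P
    + Matrix.fromBlocks (Real.sin (2*ε) • 1) (Real.cos (2*ε) • 1)
      (Real.cos (2*ε) • 1) (-(Real.sin (2*ε)) • 1)

/-- `N = diag(-I, I)`. -/
def Nmat (ι : Type*) [Fintype ι] [DecidableEq ι] : Matrix (ι ⊕ ι) (ι ⊕ ι) ℝ :=
  Matrix.fromBlocks (-1) 0 0 1

/-- `m⁺(F)`: dimension of a maximal subspace on which the quadratic form of `F`
is positive definite. -/
def posDim {ι : Type*} [Fintype ι] (F : Matrix ι ι ℝ) : ℕ :=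
  sSup {d : ℕ | ∃ W : Submodule ℝ (ι → ℝ), Module.finrank ℝ W = d ∧
    ∀ v ∈ W, v ≠ 0 → 0 < F.mulVec v ⬝ᵥ v}

/-- `m⁻(F)`: dimension of a maximal subspace on which the quadratic form of `F`
is negative definite. -/
def negDim {ι : Type*} [Fintype ι] (F : Matrix ι ι ℝ) : ℕ :=
  sSup {d : ℕ | ∃ W : Submodule ℝ (ι → ℝ), Module.finrank ℝ W = d ∧
    ∀ v ∈ W, v ≠ 0 → F.mulVec v ⬝ᵥ v < 0}

/-- The signature `sgn F = m⁺(F) - m⁻(F)`. -/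
def signat {ι : Type*} [Fintype ι] (F : Matrix ι ι ℝ) : ℤ :=
  (posDim F : ℤ) - (negDim F : ℤ)

/-- The `⋄`-product (symplectic direct sum) of two matrices. -/
def diamond {ι₁ ι₂ : Type*}
    (M₁ : Matrix (ι₁ ⊕ ι₁) (ι₁ ⊕ ι₁) ℝ) (M₂ : Matrix (ι₂ ⊕ ι₂) (ι₂ ⊕ ι₂) ℝ) :
    Matrix ((ι₁ ⊕ ι₂) ⊕ (ι₁ ⊕ ι₂)) ((ι₁ ⊕ ι₂) ⊕ (ι₁ ⊕ ι₂)) ℝ :=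
  Matrix.fromBlocks
    (Matrix.fromBlocks (M₁.submatrix Sum.inl Sum.inl) 0 0 (M₂.submatrix Sum.inl Sum.inl))
    (Matrix.fromBlocks (M₁.submatrix Sum.inl Sum.inr) 0 0 (M₂.submatrix Sum.inl Sum.inr))
    (Matrix.fromBlocks (M₁.submatrix Sum.inr Sum.inl) 0 0 (M₂.submatrix Sum.inr Sum.inl))
    (Matrix.fromBlocks (M₁.submatrix Sum.inr Sum.inr) 0 0 (M₂.submatrix Sum.inr Sum.inr))

end

section Diamond

variable {ι₁ ι₂ : Type*}

theorem diamond_eq_submatrix (M₁ : Matrix (ι₁ ⊕ ι₁) (ι₁ ⊕ ι₁) ℝ)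
    (M₂ : Matrix (ι₂ ⊕ ι₂) (ι₂ ⊕ ι₂) ℝ) :
    diamond M₁ M₂ = (Matrix.fromBlocks M₁ 0 0 M₂).submatrix
      (Equiv.sumSumSumComm ι₁ ι₂ ι₁ ι₂) (Equiv.sumSumSumComm ι₁ ι₂ ι₁ ι₂) := by
  ext ((i | i) | (i | i)) ((j | j) | (j | j)) <;> rfl

theorem diamond_transpose (M₁ : Matrix (ι₁ ⊕ ι₁) (ι₁ ⊕ ι₁) ℝ)
    (M₂ : Matrix (ι₂ ⊕ ι₂) (ι₂ ⊕ ι₂) ℝ) :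
    (diamond M₁ M₂)ᵀ = diamond M₁ᵀ M₂ᵀ := by
  simp [diamond_eq_submatrix, Matrix.transpose_submatrix, Matrix.fromBlocks_transpose]

theorem diamond_add (M₁ N₁ : Matrix (ι₁ ⊕ ι₁) (ι₁ ⊕ ι₁) ℝ)
    (M₂ N₂ : Matrix (ι₂ ⊕ ι₂) (ι₂ ⊕ ι₂) ℝ) :
    diamond M₁ M₂ + diamond N₁ N₂ = diamond (M₁ + N₁) (M₂ + N₂) := by
  ext ((i | i) | (i | i)) ((j | j) | (j | j)) <;> simp [diamond]

theorem diamond_neg (M₁ : Matrix (ι₁ ⊕ ι₁) (ι₁ ⊕ ι₁) ℝ)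
    (M₂ : Matrix (ι₂ ⊕ ι₂) (ι₂ ⊕ ι₂) ℝ) :
    diamond (-M₁) (-M₂) = -diamond M₁ M₂ := by
  ext ((i | i) | (i | i)) ((j | j) | (j | j)) <;> simp [diamond]

theorem diamond_mul [Fintype ι₁] [Fintype ι₂] (M₁ N₁ : Matrix (ι₁ ⊕ ι₁) (ι₁ ⊕ ι₁) ℝ)
    (M₂ N₂ : Matrix (ι₂ ⊕ ι₂) (ι₂ ⊕ ι₂) ℝ) :
    diamond M₁ M₂ * diamond N₁ N₂ = diamond (M₁ * N₁) (M₂ * N₂) := by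
  simp [diamond_eq_submatrix, Matrix.submatrix_mul_equiv, Matrix.fromBlocks_multiply]

theorem diamond_fromBlocks_smul_one [DecidableEq ι₁] [DecidableEq ι₂] (a b c d : ℝ) :
    diamond (Matrix.fromBlocks (a • 1) (b • 1) (c • 1) (d • 1) : Matrix (ι₁ ⊕ ι₁) (ι₁ ⊕ ι₁) ℝ)
      (Matrix.fromBlocks (a • 1) (b • 1) (c • 1) (d • 1) : Matrix (ι₂ ⊕ ι₂) (ι₂ ⊕ ι₂) ℝ) =
      Matrix.fromBlocks (a • 1) (b • 1) (c • 1) (d • 1) := by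
  ext ((i | i) | (i | i)) ((j | j) | (j | j)) <;> simp [diamond, Matrix.one_apply]

theorem Mmat_diamond [Fintype ι₁] [DecidableEq ι₁] [Fintype ι₂] [DecidableEq ι₂] (ε : ℝ)
    (M₁ : Matrix (ι₁ ⊕ ι₁) (ι₁ ⊕ ι₁) ℝ) (M₂ : Matrix (ι₂ ⊕ ι₂) (ι₂ ⊕ ι₂) ℝ) :
    Mmat ε (diamond M₁ M₂) = diamond (Mmat ε M₁) (Mmat ε M₂) := by
  simp only [Mmat, ← diamond_fromBlocks_smul_one, diamond_transpose, diamond_mul, diamond_add]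

end Diamond

section QuadraticForm

open QuadraticMap

variable {κ₁ κ₂ : Type*} [Fintype κ₁] [Fintype κ₂]

theorem weightedSumSquares_prod_equivalent (w₁ : κ₁ → ℝ) (w₂ : κ₂ → ℝ) :
    ((weightedSumSquares ℝ w₁).prod (weightedSumSquares ℝ w₂)).Equivalent
      (weightedSumSquares ℝ (Sum.elim w₁ w₂)) :=
  ⟨{ (LinearEquiv.sumArrowLequivProdArrow κ₁ κ₂ ℝ ℝ).symm with
      map_app' := fun v => by
        simp [weightedSumSquares_apply, LinearEquiv.sumArrowLequivProdArrow,
          Equiv.sumArrowEquivProdArrow] }⟩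

theorem sigPos_prod {V₁ V₂ : Type*} [AddCommGroup V₁] [Module ℝ V₁] [FiniteDimensional ℝ V₁]
    [AddCommGroup V₂] [Module ℝ V₂] [FiniteDimensional ℝ V₂]
    (Q₁ : QuadraticForm ℝ V₁) (Q₂ : QuadraticForm ℝ V₂) :
    sigPos (Q₁.prod Q₂) = sigPos Q₁ + sigPos Q₂ := by
  obtain ⟨w₁, ⟨e₁⟩⟩ := Q₁.equivalent_weightedSumSquares
  obtain ⟨w₂, ⟨e₂⟩⟩ := Q₂.equivalent_weightedSumSquares
  have e : (Q₁.prod Q₂).Equivalent (weightedSumSquares ℝ (Sum.elim w₁ w₂)) :=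
    Equivalent.trans ⟨e₁.prod e₂⟩ (weightedSumSquares_prod_equivalent w₁ w₂)
  rw [QuadraticForm.sigPos_of_equiv_weightedSumSquares e,
    QuadraticForm.sigPos_of_equiv_weightedSumSquares ⟨e₁⟩,
    QuadraticForm.sigPos_of_equiv_weightedSumSquares ⟨e₂⟩]
  simp only [← Nat.card_coe_set_eq, ← Nat.card_sum]
  exact Nat.card_congr Equiv.subtypeSum

end QuadraticForm

section Signature

variable {ι₁ ι₂ : Type*} [Fintype ι₁] [Fintype ι₂]

theorem negDim_eq_posDim_neg (F : Matrix ι₁ ι₁ ℝ) : negDim F = posDim (-F) := by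
  simp [negDim, posDim, Matrix.neg_mulVec]

variable [DecidableEq ι₁] [DecidableEq ι₂]

theorem toQuadraticForm'_apply (F : Matrix ι₁ ι₁ ℝ) (v : ι₁ → ℝ) :
    F.toQuadraticForm' v = F *ᵥ v ⬝ᵥ v := by
  rw [dotProduct_comm]
  simp [Matrix.toQuadraticForm', Matrix.toLinearMap₂'_apply']

theorem posDim_eq_sigPos (F : Matrix ι₁ ι₁ ℝ) : posDim F = sigPos F.toQuadraticForm' := by
  rw [posDim, ← (sigPos_isGreatest F.toQuadraticForm').csSup_eq]
  simp [QuadraticMap.PosDef, toQuadraticForm'_apply]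

theorem posDim_fromBlocks (F₁ : Matrix ι₁ ι₁ ℝ) (F₂ : Matrix ι₂ ι₂ ℝ) :
    posDim (Matrix.fromBlocks F₁ 0 0 F₂) = posDim F₁ + posDim F₂ := by
  have e : (Matrix.fromBlocks F₁ 0 0 F₂).toQuadraticForm'.Equivalent
      (F₁.toQuadraticForm'.prod F₂.toQuadraticForm') :=
    ⟨{ LinearEquiv.sumArrowLequivProdArrow ι₁ ι₂ ℝ ℝ with
      map_app' := fun v => by
        simp [toQuadraticForm'_apply, Matrix.fromBlocks_mulVec, dotProduct,
          LinearEquiv.sumArrowLequivProdArrow, Equiv.sumArrowEquivProdArrow,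
          Function.comp_def] }⟩
  simp only [posDim_eq_sigPos, e.sigPos_eq, sigPos_prod]

theorem posDim_submatrix (F : Matrix ι₂ ι₂ ℝ) (e : ι₁ ≃ ι₂) :
    posDim (F.submatrix e e) = posDim F := by
  have h : (F.submatrix e e).toQuadraticForm'.Equivalent F.toQuadraticForm' :=
    ⟨{ LinearEquiv.funCongrLeft ℝ ℝ e.symm with
      map_app' := fun v => by
        simp [toQuadraticForm'_apply, Matrix.submatrix_mulVec_equiv, LinearEquiv.funCongrLeft,
          LinearMap.funLeft, ← comp_equiv_symm_dotProduct] }⟩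
  simp only [posDim_eq_sigPos, h.sigPos_eq]

theorem posDim_diamond (F₁ : Matrix (ι₁ ⊕ ι₁) (ι₁ ⊕ ι₁) ℝ)
    (F₂ : Matrix (ι₂ ⊕ ι₂) (ι₂ ⊕ ι₂) ℝ) :
    posDim (diamond F₁ F₂) = posDim F₁ + posDim F₂ := by
  rw [diamond_eq_submatrix, posDim_submatrix, posDim_fromBlocks]

theorem signat_diamond (F₁ : Matrix (ι₁ ⊕ ι₁) (ι₁ ⊕ ι₁) ℝ)
    (F₂ : Matrix (ι₂ ⊕ ι₂) (ι₂ ⊕ ι₂) ℝ) :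
    signat (diamond F₁ F₂) = signat F₁ + signat F₂ := by
  simp only [signat, negDim_eq_posDim_neg, ← diamond_neg, posDim_diamond]
  push_cast
  ring

end Signature

/-- `M_ε` commutes with the `⋄`-product, and the signature is additive. -/
theorem Meps_diamond {n₁ n₂ : ℕ} (ε : ℝ)
    (M₁ : Matrix (Fin n₁ ⊕ Fin n₁) (Fin n₁ ⊕ Fin n₁) ℝ)
    (M₂ : Matrix (Fin n₂ ⊕ Fin n₂) (Fin n₂ ⊕ Fin n₂) ℝ)
    (h₁ : IsSymplectic M₁) (h₂ : IsSymplectic M₂) :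
    Mmat ε (diamond M₁ M₂) = diamond (Mmat ε M₁) (Mmat ε M₂) ∧
    signat (Mmat ε (diamond M₁ M₂)) = signat (Mmat ε M₁) + signat (Mmat ε M₂) :=
  ⟨Mmat_diamond ε M₁ M₂, by rw [Mmat_diamond, signat_diamond]⟩
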